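/- arXiv:2105.01045 — 2 statements merged into one kernel-verified Lean document; each statement's English description precedes it below -/
import Mathlib

section
/- The function φ : [0,∞) → ℝ defined by φ(t) = √t · log₂(√t + 1) is concave on [0,∞). -/
theorem sqrt_mul_log_concave_aux :
    ConcaveOn ℝ (Set.Ici (0 : ℝ))
      (fun t => Real.sqrt t * Real.log (Real.sqrt t + 1)) := by
  refine concaveOn_of_hasDerivWithinAt2_nonpos (convex_Ici 0)
    (f' := fun t => Real.log (Real.sqrt t + 1) / (2 * Real.sqrt t) + 1 / (2 * (Real.sqrt t + 1)))
    (f'' := fun t => (1 / (2 * Real.sqrt t)) *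
      (1 / (2 * Real.sqrt t * (Real.sqrt t + 1))
        - Real.log (Real.sqrt t + 1) / (2 * Real.sqrt t ^ 2)
        - 1 / (2 * (Real.sqrt t + 1) ^ 2))) ?_ ?_ ?_ ?_
  · apply Continuous.continuousOn
    refine Real.continuous_sqrt.mul (Continuous.log (by fun_prop) ?_)
    intro x
    positivity
  · intro x hx
    rw [interior_Ici] at hx
    have hx0 : 0 < x := hx
    have hs : 0 < Real.sqrt x := Real.sqrt_pos.2 hx0
    have h1 := Real.hasDerivAt_sqrt hx0.ne'
    have h2 := (h1.add_const 1).log (by positivity)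
    have h3 := h1.mul h2
    refine HasDerivAt.hasDerivWithinAt (h3.congr_deriv ?_)
    field_simp
  · intro x hx
    rw [interior_Ici] at hx
    have hx0 : 0 < x := hx
    have hs : 0 < Real.sqrt x := Real.sqrt_pos.2 hx0
    have h1 := Real.hasDerivAt_sqrt hx0.ne'
    have h2 := (h1.add_const 1).log (by positivity)
    have h3 := h2.div (h1.const_mul 2) (by positivity)
    have h4 := (hasDerivAt_const x (1 : ℝ)).div ((h1.add_const 1).const_mul 2) (by positivity)
    refine HasDerivAt.hasDerivWithinAt ((h3.add h4).congr_deriv ?_)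
    field_simp
    ring
  · intro x hx
    rw [interior_Ici] at hx
    have hx0 : 0 < x := hx
    have hs : 0 < Real.sqrt x := Real.sqrt_pos.2 hx0
    have hL := Real.one_sub_inv_le_log_of_pos (show 0 < Real.sqrt x + 1 by positivity)
    refine mul_nonpos_of_nonneg_of_nonpos (by positivity) ?_
    have e : 1 / (2 * Real.sqrt x * (Real.sqrt x + 1))
        = (1 - (Real.sqrt x + 1)⁻¹) / (2 * Real.sqrt x ^ 2) := by
      field_simp
      ring
    have h5 : (1 - (Real.sqrt x + 1)⁻¹) / (2 * Real.sqrt x ^ 2)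
        ≤ Real.log (Real.sqrt x + 1) / (2 * Real.sqrt x ^ 2) := by gcongr
    have h6 : 0 ≤ 1 / (2 * (Real.sqrt x + 1) ^ 2) := by positivity
    rw [e]
    linarith

/-- The function `φ(t) = √t·log₂(√t + 1)` is concave on `[0,∞)`. -/
theorem sqrt_mul_logb_concave :
    ConcaveOn ℝ (Set.Ici (0 : ℝ))
      (fun t => Real.sqrt t * Real.logb 2 (Real.sqrt t + 1)) := by
  have h := sqrt_mul_log_concave_aux.smul
    (show (0 : ℝ) ≤ (Real.log 2)⁻¹ from inv_nonneg.2 (Real.log_nonneg (by norm_num)))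
  refine h.congr ?_
  intro t _
  simp only [Real.logb, smul_eq_mul]
  ring
end

section
/- Let c > 1 and λ > 1 be reals, n ≥ 1 an integer, and let f : [0,∞) → [0,∞) be a non-increasing probability density function satisfying ∫_x^∞ f(t) dt ≤ c·x^(−λ) for all x > 0. Then ∫₀^∞ 92·√(n·f(x))·log₂(√(n·f(x)) + 1) dx ≤ 276·(c·(λ+1))^(1/λ)·√n·log₂(√n + 1)/min(λ − 1, 1). -/
open MeasureTheory

lemma aux_log (s r : ℝ) (hs : 0 ≤ s) (hr : 1 ≤ r) :
    Real.logb 2 (r * s + 1) ≤ r * Real.logb 2 (s + 1) := by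
  rw [← Real.logb_rpow_eq_mul_logb_of_pos (by linarith)]
  apply Real.logb_le_logb_of_le (by norm_num) (by positivity)
  have := one_add_mul_self_le_rpow_one_add (s := s) (by linarith) hr
  rw [add_comm s 1]; linarith

lemma aux_pt (n : ℕ) (y : ℝ) (hy : 0 ≤ y) :
    (y ≤ 1 → Real.sqrt (n * y) * Real.logb 2 (Real.sqrt (n * y) + 1) ≤
      (Real.sqrt n * Real.logb 2 (Real.sqrt n + 1)) * Real.sqrt y) ∧
    (1 ≤ y → Real.sqrt (n * y) * Real.logb 2 (Real.sqrt (n * y) + 1) ≤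
      (Real.sqrt n * Real.logb 2 (Real.sqrt n + 1)) * y) := by
  have hs := Real.sqrt_nonneg (n : ℝ)
  have hq := Real.sqrt_nonneg y
  rw [Real.sqrt_mul (by positivity)]
  constructor
  · intro h
    have h1 : Real.sqrt y ≤ 1 := Real.sqrt_le_one.mpr h
    have : Real.logb 2 (Real.sqrt n * Real.sqrt y + 1) ≤ Real.logb 2 (Real.sqrt n + 1) := by
      apply Real.logb_le_logb_of_le (by norm_num) (by positivity)
      nlinarith
    have := mul_le_mul_of_nonneg_left this (mul_nonneg hs hq)
    linarith
  · intro h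
    have h1 : 1 ≤ Real.sqrt y := Real.one_le_sqrt.mpr h
    have := mul_le_mul_of_nonneg_left (aux_log _ _ hs h1) (mul_nonneg hs hq)
    rw [mul_comm (Real.sqrt y)] at this
    refine this.trans (le_of_eq ?_)
    nth_rewrite 3 [← Real.mul_self_sqrt hy]
    ring

lemma aux_num (c lam : ℝ) (hc : 1 < c) (hlam : 1 < lam) :
    let t := (c * (lam + 1)) ^ (1 / lam)
    1 + t + 2 * Real.sqrt (t * (lam / (lam + 1))) / (lam - 1) ≤ 3 * t / min (lam - 1) 1 := by
  intro t
  have hA : lam + 1 ≤ c * (lam + 1) := by nlinarith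
  have ht1 : 1 ≤ t := Real.one_le_rpow (by linarith) (by positivity)
  have hm : 0 < lam - 1 := by linarith
  set q := Real.sqrt (t * (lam / (lam + 1))) with hq
  have hq0 : 0 ≤ q := Real.sqrt_nonneg _
  have hqq : q * q = t * (lam / (lam + 1)) := Real.mul_self_sqrt (by positivity)
  have hl1 : lam / (lam + 1) ≤ 1 := by rw [div_le_one (by linarith)]; linarith
  rcases le_or_gt lam 3 with h3 | h3
  · have ht : 3/2 ≤ t := by
      have h := rpow_one_add_le_one_add_mul_self (s := (19/8:ℝ)) (p := lam/3) (by norm_num) (by positivity) (by linarith)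
      have e : (1 + 19/8 : ℝ) ^ (lam/3) = (3/2:ℝ) ^ lam := by
        rw [show (1 + 19/8 : ℝ) = (3/2:ℝ) ^ (3:ℝ) by norm_num, ← Real.rpow_mul (by norm_num)]
        congr 1; ring
      rw [e] at h
      have : ((3/2:ℝ) ^ lam) ^ (1/lam) ≤ t := by
        apply Real.rpow_le_rpow (by positivity) (by linarith) (by positivity)
      rwa [← Real.rpow_mul (by norm_num), mul_one_div_cancel (by linarith), Real.rpow_one] at this
    have hag : 2 * q ≤ 1 + t * (lam / (lam + 1)) := by nlinarith [sq_nonneg (q - 1)]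
    rcases le_total lam 2 with h2 | h2
    · rw [min_eq_left (by linarith), le_div_iff₀ hm, add_mul, div_mul_cancel₀ _ hm.ne']
      have : lam / (lam + 1) ≤ 2/3 := by rw [div_le_div_iff₀ (by linarith) (by norm_num)]; linarith
      nlinarith
    · rw [min_eq_right (by linarith), div_one]
      have : 2 * q / (lam - 1) ≤ (1 + t * (lam / (lam + 1))) / (lam - 1) := by gcongr
      have h5 : (1 + t * (lam / (lam + 1))) / (lam - 1) = 1 / (lam - 1) + t * (lam / ((lam + 1) * (lam - 1))) := by
        field_simp
      have h6 : 1 / (lam - 1) ≤ 1 := by rw [div_le_one hm]; linarith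
      have h7 : lam / ((lam + 1) * (lam - 1)) ≤ 2/3 := by
        rw [div_le_div_iff₀ (by positivity) (by norm_num)]; nlinarith
      nlinarith
  · rw [min_eq_right (by linarith), div_one]
    have : 2 * q / (lam - 1) ≤ q := by rw [div_le_iff₀ hm]; nlinarith
    nlinarith

lemma aux_tail (c lam : ℝ) (hc : 0 < c) (f : ℝ → ℝ) (hf_nonneg : ∀ x, 0 ≤ f x)
    (hf_int : IntegrableOn f (Set.Ioi (0 : ℝ)))
    (htail : ∀ x : ℝ, 0 < x → ∫ t in Set.Ioi x, f t ≤ c * x ^ (-lam))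
    (t p : ℝ) (ht : 0 < t) (hp : 0 < p) (hpl : p < lam) :
    ∫⁻ x in Set.Ioi t, ENNReal.ofReal (f x * x ^ p) ≤
      ENNReal.ofReal (c * lam / (lam - p) * t ^ (p - lam)) := by
  have hfm : AEMeasurable (fun x => ENNReal.ofReal (f x)) (volume.restrict (Set.Ioi t)) :=
    (hf_int.mono_set (Set.Ioi_subset_Ioi ht.le)).aemeasurable.ennreal_ofReal
  set μ := (volume.restrict (Set.Ioi t)).withDensity (fun x => ENNReal.ofReal (f x)) with hμ
  have hac : μ ≪ volume.restrict (Set.Ioi t) := withDensity_absolutelyContinuous _ _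
  have h0 : 0 ≤ᵐ[μ] (fun x : ℝ => x) := by
    apply hac.ae_le
    filter_upwards [ae_restrict_mem measurableSet_Ioi] with x hx
    exact (ht.trans hx).le
  have key := lintegral_rpow_eq_lintegral_meas_lt_mul μ h0 aemeasurable_id hp
  have hmeas : Measurable (fun x : ℝ => ENNReal.ofReal (x ^ p)) := by fun_prop
  have e1 : ∫⁻ x in Set.Ioi t, ENNReal.ofReal (f x * x ^ p) = ∫⁻ x, ENNReal.ofReal (x ^ p) ∂μ := by
    rw [hμ, lintegral_withDensity_eq_lintegral_mul₀ hfm hmeas.aemeasurable]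
    refine lintegral_congr fun x => ?_
    rw [Pi.mul_apply, ENNReal.ofReal_mul (hf_nonneg x)]
  rw [e1, key]
  have hμle : ∀ s : ℝ, μ {a | s < a} ≤ ENNReal.ofReal (c * (max s t) ^ (-lam)) := by
    intro s
    have hm : 0 < max s t := lt_max_of_lt_right ht
    have : μ {a | s < a} = ∫⁻ x in Set.Ioi (max s t), ENNReal.ofReal (f x) := by
      change μ (Set.Ioi s) = _
      rw [hμ, withDensity_apply _ measurableSet_Ioi, Measure.restrict_restrict measurableSet_Ioi,
        Set.Ioi_inter_Ioi]
    rw [this, ← ofReal_integral_eq_lintegral_ofReal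
      (hf_int.mono_set (Set.Ioi_subset_Ioi hm.le)) (Filter.Eventually.of_forall hf_nonneg)]
    exact ENNReal.ofReal_le_ofReal (htail _ hm)
  have hi1 : IntegrableOn (fun s : ℝ => c * t ^ (-lam) * s ^ (p - 1)) (Set.Ioc 0 t) := by
    apply Integrable.const_mul
    have := intervalIntegral.intervalIntegrable_rpow' (a := 0) (b := t) (r := p - 1) (by linarith)
    rwa [intervalIntegrable_iff_integrableOn_Ioc_of_le ht.le] at this
  have hi2 : IntegrableOn (fun s : ℝ => c * s ^ (p - lam - 1)) (Set.Ioi t) :=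
    (integrableOn_Ioi_rpow_of_lt (by linarith) ht).const_mul c
  have b1 : ∫⁻ s in Set.Ioc 0 t, μ {a | s < a} * ENNReal.ofReal (s ^ (p - 1)) ≤
      ENNReal.ofReal (c * t ^ (-lam) * (t ^ p / p)) := by
    have : c * t ^ (-lam) * (t ^ p / p) = ∫ s in Set.Ioc 0 t, c * t ^ (-lam) * s ^ (p - 1) := by
      rw [integral_const_mul, ← intervalIntegral.integral_of_le ht.le,
        integral_rpow (Or.inl (by linarith))]
      simp [Real.zero_rpow hp.ne']
    rw [this, ofReal_integral_eq_lintegral_ofReal hi1 (by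
      filter_upwards [ae_restrict_mem measurableSet_Ioc] with x hx
      have := hx.1
      simp only [Pi.zero_apply]; positivity)]
    refine setLIntegral_mono' measurableSet_Ioc fun s hs => ?_
    rw [ENNReal.ofReal_mul (by positivity)]
    have := hμle s
    rw [max_eq_right hs.2] at this
    gcongr
  have b2 : ∫⁻ s in Set.Ioi t, μ {a | s < a} * ENNReal.ofReal (s ^ (p - 1)) ≤
      ENNReal.ofReal (c * (t ^ (p - lam) / (lam - p))) := by
    have : c * (t ^ (p - lam) / (lam - p)) = ∫ s in Set.Ioi t, c * s ^ (p - lam - 1) := by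
      rw [integral_const_mul, integral_Ioi_rpow_of_lt (by linarith) ht, sub_add_cancel,
        neg_div, ← div_neg, neg_sub]
    rw [this, ofReal_integral_eq_lintegral_ofReal hi2 (by
      filter_upwards [ae_restrict_mem measurableSet_Ioi] with x hx
      have := ht.trans hx
      simp only [Pi.zero_apply]; positivity)]
    refine setLIntegral_mono' measurableSet_Ioi fun s hs => ?_
    have hs0 : 0 < s := ht.trans hs
    have := hμle s
    rw [max_eq_left (le_of_lt hs)] at this
    rw [show p - lam - 1 = -lam + (p - 1) by ring, Real.rpow_add hs0, ← mul_assoc,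
      ENNReal.ofReal_mul (by positivity)]
    gcongr
  rw [← Set.Ioc_union_Ioi_eq_Ioi ht.le, lintegral_union measurableSet_Ioi
    (Set.Ioc_disjoint_Ioi le_rfl)]
  refine (mul_le_mul_right (add_le_add b1 b2) _).trans (le_of_eq ?_)
  have hd : 0 < lam - p := by linarith
  rw [← ENNReal.ofReal_add (by positivity) (by positivity), ← ENNReal.ofReal_mul hp.le]
  congr 1
  rw [show p - lam = -lam + p by ring, Real.rpow_add ht]
  field_simp
  ring

lemma aux_le_one (f : ℝ → ℝ) (hf_nonneg : ∀ x, 0 ≤ f x)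
    (hf_anti : AntitoneOn f (Set.Ici (0 : ℝ)))
    (hf_int : IntegrableOn f (Set.Ioi (0 : ℝ)))
    (hf_pdf : ∫ t in Set.Ioi (0 : ℝ), f t = 1) (x : ℝ) (hx : 1 ≤ x) : f x ≤ 1 := by
  have h1 : ∫ t in Set.Ioc 0 x, f x ≤ ∫ t in Set.Ioc 0 x, f t := by
    apply setIntegral_mono_on (by simp) (hf_int.mono_set Set.Ioc_subset_Ioi_self) measurableSet_Ioc
    intro y hy
    exact hf_anti hy.1.le (by simp; linarith) hy.2
  have h2 : ∫ t in Set.Ioc 0 x, f t ≤ ∫ t in Set.Ioi 0, f t :=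
    setIntegral_mono_set hf_int (Filter.Eventually.of_forall hf_nonneg)
      (Filter.Eventually.of_forall Set.Ioc_subset_Ioi_self)
  simp at h1
  rw [max_eq_left (by linarith)] at h1
  nlinarith [hf_nonneg x]

theorem pdf_integral_bound
    (c lam : ℝ) (hc : 1 < c) (hlam : 1 < lam) (n : ℕ) (hn : 1 ≤ n)
    (f : ℝ → ℝ) (hf_nonneg : ∀ x, 0 ≤ f x)
    (hf_anti : AntitoneOn f (Set.Ici (0 : ℝ)))
    (hf_int : IntegrableOn f (Set.Ioi (0 : ℝ)))
    (hf_pdf : ∫ t in Set.Ioi (0 : ℝ), f t = 1)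
    (htail : ∀ x : ℝ, 0 < x → ∫ t in Set.Ioi x, f t ≤ c * x ^ (-lam)) :
    ∫ x in Set.Ioi (0 : ℝ),
        92 * Real.sqrt (n * f x) * Real.logb 2 (Real.sqrt (n * f x) + 1)
      ≤ 276 * (c * (lam + 1)) ^ (1 / lam) * Real.sqrt n
          * Real.logb 2 (Real.sqrt n + 1) / min (lam - 1) 1 := by
  have hnum := aux_num c lam hc hlam
  simp only at hnum
  have hA : 1 ≤ c * (lam + 1) := by nlinarith
  have ht1 : 1 ≤ (c * (lam + 1)) ^ (1 / lam) := Real.one_le_rpow hA (by positivity)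
  have htl : ((c * (lam + 1)) ^ (1 / lam)) ^ lam = c * (lam + 1) := by
    rw [← Real.rpow_mul (by positivity), one_div_mul_cancel (by linarith), Real.rpow_one]
  set t := (c * (lam + 1)) ^ (1 / lam) with htdef
  have ht : 0 < t := by linarith
  have hlog : ∀ y : ℝ, 0 ≤ y → 0 ≤ Real.logb 2 (y + 1) := fun y hy =>
    Real.logb_nonneg (by norm_num) (by linarith)
  set K := Real.sqrt n * Real.logb 2 (Real.sqrt n + 1) with hK
  have hK0 : 0 ≤ K := mul_nonneg (Real.sqrt_nonneg _) (hlog _ (Real.sqrt_nonneg _))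
  set p := (lam + 1) / 2 with hp
  set b := Real.sqrt (c * lam) with hb
  have hb0 : 0 < b := Real.sqrt_pos.mpr (by positivity)
  have hbb : b * b = c * lam := Real.mul_self_sqrt (by positivity)
  -- tail integral
  have htl1 := aux_tail c lam (by linarith) f hf_nonneg hf_int htail t p ht (by positivity)
    (by linarith)
  have hfm : AEStronglyMeasurable f (volume.restrict (Set.Ioi t)) :=
    (hf_int.mono_set (Set.Ioi_subset_Ioi ht.le)).aestronglyMeasurable
  have hmeas : AEStronglyMeasurable (fun x => f x * x ^ p) (volume.restrict (Set.Ioi t)) := by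
    apply hfm.mul
    exact (by fun_prop : Measurable (fun x : ℝ => x ^ p)).aestronglyMeasurable
  have hnn : 0 ≤ᵐ[volume.restrict (Set.Ioi t)] (fun x => f x * x ^ p) := by
    filter_upwards [ae_restrict_mem measurableSet_Ioi] with x hx
    exact mul_nonneg (hf_nonneg x) (Real.rpow_nonneg (ht.trans hx).le _)
  have hI1 : IntegrableOn (fun x => f x * x ^ p) (Set.Ioi t) := by
    refine ⟨hmeas, ?_⟩
    rw [hasFiniteIntegral_iff_ofReal hnn]
    exact htl1.trans_lt ENNReal.ofReal_lt_top
  have hd : 0 < lam - 1 := by linarith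
  have hd2 : 0 < lam - p := by rw [hp]; linarith
  have hV1 : ∫ x in Set.Ioi t, f x * x ^ p ≤ c * lam / (lam - p) * t ^ (p - lam) := by
    rw [integral_eq_lintegral_of_nonneg_ae hnn hmeas]
    exact ENNReal.toReal_le_of_le_ofReal (by positivity) htl1
  have hI2 : IntegrableOn (fun x : ℝ => x ^ (-p)) (Set.Ioi t) :=
    integrableOn_Ioi_rpow_of_lt (by rw [hp]; linarith) ht
  have hV2 : ∫ x in Set.Ioi t, x ^ (-p) = t ^ (p - lam) / (lam - p) := by
    rw [integral_Ioi_rpow_of_lt (by rw [hp]; linarith) ht]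
    rw [show -p + 1 = p - lam by rw [hp]; ring, neg_div, ← div_neg, neg_sub]
  have hI3 : IntegrableOn (fun x => 1 + f x) (Set.Ioc 0 t) :=
    Integrable.add (by simp) (hf_int.mono_set Set.Ioc_subset_Ioi_self)
  have hV3 : ∫ x in Set.Ioc 0 t, (1 + f x) ≤ t + 1 := by
    rw [integral_add (by simp) (hf_int.mono_set Set.Ioc_subset_Ioi_self)]
    have h2 : ∫ t in Set.Ioc 0 t, f t ≤ ∫ t in Set.Ioi 0, f t :=
      setIntegral_mono_set hf_int (Filter.Eventually.of_forall hf_nonneg)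
        (Filter.Eventually.of_forall Set.Ioc_subset_Ioi_self)
    simp [max_eq_left ht.le]
    linarith
  -- the dominating function
  let B1 : ℝ → ℝ := fun x => 1 + f x
  let B2 : ℝ → ℝ := fun x => (1 / (2 * b)) * (f x * x ^ p) + (b / 2) * x ^ (-p)
  have hB2 : IntegrableOn B2 (Set.Ioi t) := (hI1.const_mul _).add (hI2.const_mul _)
  have hT : b * t ^ (p - lam) = Real.sqrt (t * (lam / (lam + 1))) := by
    symm
    rw [Real.sqrt_eq_iff_mul_self_eq (by positivity) (by positivity)]
    rw [show b * t ^ (p - lam) * (b * t ^ (p - lam)) = (b * b) * (t ^ (p - lam) * t ^ (p - lam)) by ring,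
      ← Real.rpow_add ht, hbb, show p - lam + (p - lam) = 1 - lam by rw [hp]; ring,
      Real.rpow_sub ht, htl, Real.rpow_one]
    field_simp
  have hVB2 : ∫ x in Set.Ioi t, B2 x ≤ 2 * Real.sqrt (t * (lam / (lam + 1))) / (lam - 1) := by
    simp only [B2]
    rw [integral_add (hI1.const_mul _) (hI2.const_mul _), integral_const_mul, integral_const_mul,
      hV2, ← hT]
    have h := mul_le_mul_of_nonneg_left hV1 (by positivity : 0 ≤ 1 / (2 * b))
    refine (add_le_add_left h _).trans (le_of_eq ?_)
    rw [← hbb, show lam - p = (lam - 1) / 2 by rw [hp]; ring]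
    field_simp
    ring
  let B : ℝ → ℝ := fun x => 92 * K * ((Set.Ioc 0 t).indicator B1 x + (Set.Ioi t).indicator B2 x)
  have hiB1 : IntegrableOn ((Set.Ioc 0 t).indicator B1) (Set.Ioi 0) :=
    ((integrable_indicator_iff measurableSet_Ioc).mpr hI3).integrableOn
  have hiB2 : IntegrableOn ((Set.Ioi t).indicator B2) (Set.Ioi 0) :=
    ((integrable_indicator_iff measurableSet_Ioi).mpr hB2).integrableOn
  have hBi : IntegrableOn B (Set.Ioi 0) := (hiB1.add hiB2).const_mul _
  have hBV : ∫ x in Set.Ioi 0, B x ≤ 92 * K * (3 * t / min (lam - 1) 1) := by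
    simp only [B]
    rw [integral_const_mul, integral_add hiB1 hiB2, setIntegral_indicator measurableSet_Ioc,
      setIntegral_indicator measurableSet_Ioi,
      Set.inter_eq_right.mpr Set.Ioc_subset_Ioi_self,
      Set.inter_eq_right.mpr (Set.Ioi_subset_Ioi ht.le)]
    apply mul_le_mul_of_nonneg_left _ (by positivity)
    have : ∫ x in Set.Ioc 0 t, B1 x ≤ t + 1 := hV3
    linarith
  have hmain : ∫ x in Set.Ioi (0 : ℝ),
        92 * Real.sqrt (n * f x) * Real.logb 2 (Real.sqrt (n * f x) + 1) ≤
        ∫ x in Set.Ioi 0, B x := by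
    refine integral_mono_of_nonneg (Filter.Eventually.of_forall fun x => ?_) hBi ?_
    · exact mul_nonneg (by positivity) (hlog _ (Real.sqrt_nonneg _))
    · filter_upwards [ae_restrict_mem measurableSet_Ioi] with x hx
      have hx0 : 0 < x := hx
      obtain ⟨p1, p2⟩ := aux_pt n (f x) (hf_nonneg x)
      rw [← hK] at p1 p2
      have hf0 := hf_nonneg x
      simp only [B]
      rw [mul_assoc 92, mul_assoc 92]
      refine mul_le_mul_of_nonneg_left ?_ (by norm_num)
      rcases le_or_gt x t with hxt | hxt
      · rw [Set.indicator_of_mem (show x ∈ Set.Ioc 0 t from ⟨hx0, hxt⟩),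
          Set.indicator_of_notMem (by simpa using hxt), add_zero]
        simp only [B1]
        rcases le_total (f x) 1 with h | h
        · refine (p1 h).trans (mul_le_mul_of_nonneg_left ?_ hK0)
          have := Real.sqrt_le_one.mpr h
          linarith
        · exact (p2 h).trans (mul_le_mul_of_nonneg_left (by linarith) hK0)
      · rw [Set.indicator_of_notMem (by simp [hxt]),
          Set.indicator_of_mem (show x ∈ Set.Ioi t from hxt), zero_add]
        simp only [B2]
        have h := aux_le_one f hf_nonneg hf_anti hf_int hf_pdf x (by linarith)
        refine (p1 h).trans (mul_le_mul_of_nonneg_left ?_ hK0)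
        have hxp : 0 < x ^ p := Real.rpow_pos_of_pos hx0 _
        rw [Real.rpow_neg hx0.le]
        have hsq : Real.sqrt (f x) * Real.sqrt (f x) = f x := Real.mul_self_sqrt hf0
        set u := Real.sqrt (f x)
        rw [← hsq]
        have e : 1 / (2 * b) * (u * u * x ^ p) + b / 2 * (x ^ p)⁻¹ - u
            = (u * x ^ p - b) ^ 2 / (2 * b * x ^ p) := by
          field_simp
          ring
        have : 0 ≤ (u * x ^ p - b) ^ 2 / (2 * b * x ^ p) := by positivity
        linarith
  refine (hmain.trans hBV).trans (le_of_eq ?_)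
  rw [hK]
  ring
end
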